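/- Let G be a finite abelian group, Ω ⊆ G, b : Ω → ℝ, s_1, …, s_d ∈ G, μ > 0, and let w̄ : G × G → ℝ be symmetric with w̄ ≥ 0. For i = 1,…,d set Ω_i = { x ∈ G : x + s_i ∈ Ω } and define the energy E(f) = ∑_{i=1}^d [ ∑_{x ∈ G∖Ω_i} ∑_{y ∈ G} w̄(x,y)(f(x + s_i) − f(y + s_i))² + μ ∑_{x ∈ Ω_i} ∑_{y ∈ G} w̄(x,y)(f(x + s_i) − f(y + s_i))² ] for f : G → ℝ. Define the assembled weight w̃(x,y) = ∑_{i=1}^d w̄(x − s_i, y − s_i). Then a function f : G → ℝ with f(x) = b(x) for all x ∈ Ω minimizes E over { g : G → ℝ : g|_Ω = b } if and only if for every x ∈ G∖Ω, 2 ∑_{y ∈ G} w̃(x,y)(f(x) − f(y)) + (μ − 1) ∑_{y ∈ Ω} w̃(x,y)(f(x) − f(y)) = 0. -/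

import Mathlib

/-!
Substituting `x + s i` for `x` and `y + s i` for `y` turns the energy into the single quadratic form
`Q(f) = ∑ x, ∑ y, k x y * (f x - f y) ^ 2` with kernel `k x y = c x * wt x y`, where `c` is `μ` on
`Ω` and `1` off `Ω` (`ldmm_energy_assembled`). Expanding, `Q(f + t h) = Q(f) + 2 t B(f, h) + t² Q(h)`
with `Q ≥ 0`, so `f` is a minimizer exactly when `B(f, h) = 0` for every `h` vanishing on `Ω`.
By the symmetry of `wt`, summation by parts (`ldmm_sum_by_parts`) gives
`B(f, h) = ∑ x, h x * ∑ y, (c x + c y) * wt x y * (f x - f y)`, and for `x ∉ Ω` the inner sum is the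
left-hand side of the Euler–Lagrange equation, since `c x + c y = 2 + (μ - 1) 1_Ω(y)`.
-/

/-- The energy is the weighted Dirichlet form of the assembled weight. -/
lemma ldmm_energy_assembled {G : Type*} [AddCommGroup G] [Fintype G] [DecidableEq G]
    (Ω : Finset G) (d : ℕ) (s : Fin d → G) (μ : ℝ) (w wt : G → G → ℝ)
    (hwt : ∀ x y, wt x y = ∑ i : Fin d, w (x - s i) (y - s i)) (f : G → ℝ) :
    (∑ i : Fin d,
        ((∑ x ∈ Finset.univ.filter (fun x => x + s i ∉ Ω), ∑ y : G,
            w x y * (f (x + s i) - f (y + s i)) ^ 2)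
          + μ * ∑ x ∈ Finset.univ.filter (fun x => x + s i ∈ Ω), ∑ y : G,
            w x y * (f (x + s i) - f (y + s i)) ^ 2))
      = ∑ x, ∑ y, (if x ∈ Ω then μ else 1) * wt x y * (f x - f y) ^ 2 := by
  have key : ∀ i : Fin d,
      ((∑ x ∈ Finset.univ.filter (fun x => x + s i ∉ Ω), ∑ y : G,
            w x y * (f (x + s i) - f (y + s i)) ^ 2)
          + μ * ∑ x ∈ Finset.univ.filter (fun x => x + s i ∈ Ω), ∑ y : G,
            w x y * (f (x + s i) - f (y + s i)) ^ 2)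
      = ∑ x, ∑ y, (if x ∈ Ω then μ else 1) * w (x - s i) (y - s i) * (f x - f y) ^ 2 := by
    intro i
    rw [← Equiv.sum_comp (Equiv.addRight (s i)) (fun x => ∑ y, (if x ∈ Ω then μ else 1)
      * w (x - s i) (y - s i) * (f x - f y) ^ 2), Finset.sum_filter, Finset.sum_filter,
      Finset.mul_sum, ← Finset.sum_add_distrib]
    refine Finset.sum_congr rfl fun x _ => ?_
    conv_rhs => rw [← Equiv.sum_comp (Equiv.addRight (s i))]
    by_cases hx : x + s i ∈ Ω <;> simp [hx, Finset.mul_sum, mul_assoc]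
  rw [Finset.sum_congr rfl fun i _ => key i, Finset.sum_comm]
  refine Finset.sum_congr rfl fun x _ => ?_
  rw [Finset.sum_comm]
  refine Finset.sum_congr rfl fun y _ => ?_
  rw [hwt, Finset.mul_sum, Finset.sum_mul]

/-- Summation by parts for a kernel that need not be symmetric. -/
lemma ldmm_sum_by_parts {G : Type*} [Fintype G] (k : G → G → ℝ) (f h : G → ℝ) :
    ∑ x, ∑ y, k x y * (f x - f y) * (h x - h y)
      = ∑ x, h x * ∑ y, (k x y + k y x) * (f x - f y) := by
  have h1 : ∑ x, ∑ y, k x y * (f x - f y) * (h x - h y)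
      = ∑ x, ∑ y, k x y * (f x - f y) * h x + ∑ x, ∑ y, k x y * (f y - f x) * h y := by
    simp only [← Finset.sum_add_distrib]
    exact Finset.sum_congr rfl fun x _ => Finset.sum_congr rfl fun y _ => by ring
  rw [h1, Finset.sum_comm (f := fun x y => k x y * (f y - f x) * h y)]
  simp only [← Finset.sum_add_distrib, Finset.mul_sum]
  exact Finset.sum_congr rfl fun x _ => Finset.sum_congr rfl fun y _ => by ring

/-- A function `f` agreeing with the observed data `b` on `Ω` minimizes the
weighted-graph-Laplacian energy `E` (Equation (3.1) of the paper) over all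
functions agreeing with `b` on `Ω` if and only if it satisfies the
Euler–Lagrange equation (Equation (3.8)) on the unsampled voxels. -/
theorem ldmm_energy_min_iff_euler_lagrange
    (G : Type*) [AddCommGroup G] [Fintype G] [DecidableEq G]
    (Ω : Finset G) (b : G → ℝ) (d : ℕ) (s : Fin d → G) (μ : ℝ) (hμ : 0 < μ)
    (w : G → G → ℝ) (hsymm : ∀ x y, w x y = w y x) (hnn : ∀ x y, 0 ≤ w x y)
    (E : (G → ℝ) → ℝ)
    (hE : ∀ f : G → ℝ, E f = ∑ i : Fin d,
        ((∑ x ∈ Finset.univ.filter (fun x => x + s i ∉ Ω), ∑ y : G,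
            w x y * (f (x + s i) - f (y + s i)) ^ 2)
          + μ * ∑ x ∈ Finset.univ.filter (fun x => x + s i ∈ Ω), ∑ y : G,
            w x y * (f (x + s i) - f (y + s i)) ^ 2))
    (wt : G → G → ℝ) (hwt : ∀ x y, wt x y = ∑ i : Fin d, w (x - s i) (y - s i))
    (f : G → ℝ) (hf : ∀ x ∈ Ω, f x = b x) :
    (∀ g : G → ℝ, (∀ x ∈ Ω, g x = b x) → E f ≤ E g) ↔
      ∀ x : G, x ∉ Ω →
        2 * (∑ y : G, wt x y * (f x - f y))
          + (μ - 1) * (∑ y ∈ Ω, wt x y * (f x - f y)) = 0 := by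
  set c : G → ℝ := fun x => if x ∈ Ω then μ else 1 with hc
  have hcnn : ∀ x, 0 ≤ c x := fun x => by simp only [hc]; split_ifs <;> linarith
  have hwtsymm : ∀ x y, wt x y = wt y x := fun x y => by
    rw [hwt, hwt]; exact Finset.sum_congr rfl fun i _ => hsymm _ _
  have hwtnn : ∀ x y, 0 ≤ wt x y := fun x y => by
    rw [hwt]; exact Finset.sum_nonneg fun i _ => hnn _ _
  have hQ : ∀ g, E g = ∑ x, ∑ y, c x * wt x y * (g x - g y) ^ 2 := fun g => by
    rw [hE, ldmm_energy_assembled Ω d s μ w wt hwt g]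
  have hEnn : ∀ g, 0 ≤ E g := fun g => by
    rw [hQ]
    exact Finset.sum_nonneg fun x _ => Finset.sum_nonneg fun y _ =>
      mul_nonneg (mul_nonneg (hcnn x) (hwtnn x y)) (sq_nonneg _)
  set L : G → ℝ := fun x => ∑ y, (c x * wt x y + c y * wt y x) * (f x - f y) with hL
  have hexp : ∀ (h : G → ℝ) (t : ℝ), E (fun x => f x + t * h x)
      = E f + 2 * t * (∑ x, h x * L x) + t ^ 2 * E h := fun h t => by
    rw [hL, ← ldmm_sum_by_parts (fun x y => c x * wt x y) f h, hQ, hQ, hQ]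
    simp only [Finset.mul_sum, ← Finset.sum_add_distrib]
    exact Finset.sum_congr rfl fun x _ => Finset.sum_congr rfl fun y _ => by ring
  have hEL : ∀ x, x ∉ Ω → L x = 2 * (∑ y : G, wt x y * (f x - f y))
      + (μ - 1) * (∑ y ∈ Ω, wt x y * (f x - f y)) := fun x hx => by
    have h2 : ∑ y ∈ Ω, wt x y * (f x - f y)
        = ∑ y, if y ∈ Ω then wt x y * (f x - f y) else 0 := by
      rw [← Finset.sum_filter]; simp
    rw [h2, Finset.mul_sum, Finset.mul_sum, ← Finset.sum_add_distrib]
    refine Finset.sum_congr rfl fun y _ => ?_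
    rw [hwtsymm y x]
    simp only [hc, if_neg hx]
    split_ifs <;> ring
  constructor
  · intro hmin x hx
    rw [← hEL x hx]
    -- Perturbing along the indicator of `x`, the polynomial `E(e_x) t² + 2 L(x) t` is nonnegative
    -- for all `t`, so its discriminant `(2 L(x))²` is nonpositive.
    have hpoly : ∀ t : ℝ, 0 ≤ E (Pi.single x 1) * (t * t) + (2 * L x) * t + 0 := fun t => by
      have h1 := hmin (fun z => f z + t * (Pi.single x 1 : G → ℝ) z) fun z hz => by
        have hzx : z ≠ x := fun h => hx (h ▸ hz)
        simp [hzx, hf z hz]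
      rw [hexp] at h1
      have h2 : ∑ z, (Pi.single x 1 : G → ℝ) z * L z = L x := by
        simp [Pi.single_apply]
      rw [h2] at h1
      linarith
    have hd := discrim_le_zero hpoly
    simp only [discrim] at hd
    have : L x ^ 2 = 0 := le_antisymm (by nlinarith) (sq_nonneg _)
    exact pow_eq_zero_iff two_ne_zero |>.mp this
  · intro hel g hg
    have h1 := hexp (fun x => g x - f x) 1
    have h2 : ∑ x, (g x - f x) * L x = 0 := Finset.sum_eq_zero fun x _ => by
      by_cases hx : x ∈ Ω
      · rw [hg x hx, hf x hx, sub_self, zero_mul]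
      · rw [hEL x hx, hel x hx, mul_zero]
    rw [h2] at h1
    have h3 : (fun x => f x + 1 * (g x - f x)) = g := by funext x; ring
    rw [h3] at h1
    linarith [hEnn fun x => g x - f x]
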